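/- Let a = 1 and γ > 0 and let A and L be the Timoshenko coefficient matrices (with a = 1). Then there exist constants C > 0 and c > 0 such that for every ξ ∈ ℝ and every differentiable function û : [0,∞) → ℂ⁴ satisfying û′(t) + iξA û(t) + L û(t) = 0 for all t ≥ 0, one has |û(t)| ≤ C e^{−c ρ(ξ) t} |û(0)| for all t ≥ 0, where ρ(ξ) := ξ²/(1 + ξ²). -/

import Mathlib

open Matrix BigOperators Finset

noncomputable section

/-- Complexification of a real matrix. -/
def cmap {a b : ℕ} (X : Matrix (Fin a) (Fin b) ℝ) : Matrix (Fin a) (Fin b) ℂ :=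
  X.map (fun x => (x : ℂ))

/-- Real part of the standard Hermitian inner product `⟨x, y⟩ = ∑ xᵢ conj yᵢ` on `ℂᵐ`. -/
def reIP {m : ℕ} (x y : Fin m → ℂ) : ℝ := (∑ i, x i * (starRingEnd ℂ) (y i)).re

/-- Symmetric part `X₁ = (X + Xᵀ)/2` of a real square matrix. -/
def symP {m : ℕ} (X : Matrix (Fin m) (Fin m) ℝ) : Matrix (Fin m) (Fin m) ℝ :=
  (2⁻¹ : ℝ) • (X + Xᵀ)

/-- Skew-symmetric part `X₂ = (X − Xᵀ)/2` of a real square matrix. -/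
def skewP {m : ℕ} (X : Matrix (Fin m) (Fin m) ℝ) : Matrix (Fin m) (Fin m) ℝ :=
  (2⁻¹ : ℝ) • (X - Xᵀ)

/-- Kernel of (the complexification of) a real matrix, as a subset of `ℂᵐ`. -/
def kerC {m : ℕ} (L : Matrix (Fin m) (Fin m) ℝ) : Set (Fin m → ℂ) :=
  {z | (cmap L).mulVec z = 0}

/-- Euclidean norm on `ℂᵐ`. -/
def cnrm {m : ℕ} (z : Fin m → ℂ) : ℝ := Real.sqrt (∑ i, Complex.normSq (z i))

/-- Coefficient matrix `A` of the Timoshenko system. -/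
def TimA (a : ℝ) : Matrix (Fin 4) (Fin 4) ℝ :=
  -(!![0, 1, 0, 0; 1, 0, 0, 0; 0, 0, 0, a; 0, 0, a, 0])

/-- Relaxation matrix `L` of the Timoshenko system. -/
def TimL (γ : ℝ) : Matrix (Fin 4) (Fin 4) ℝ :=
  !![0, 0, 0, 1; 0, 0, 0, 0; 0, 0, 0, 0; -1, 0, 0, γ]

/-
The energy `|û|²` alone dissipates only through the last component of `û`. It is corrected to
`|û|² + ε Re⟨S û, û⟩ - δ ξ / (1 + ξ²) Re⟨i K û, û⟩`. The symmetric multiplier `S` makes the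
relaxation term control all of `|L û|²`; as `S A` is symmetric (this is where `a = 1` enters), it
costs nothing in `ξ`. The skew matrix `K`, for which `K A` is positive on `ker L`, supplies the
missing dissipation at the rate `ρ(ξ)`, up to errors absorbed by `|L û|²`. For small `ε` and `δ` the
corrected energy is equivalent to `|û|²` uniformly in `ξ`, and Grönwall's inequality concludes.
-/

/-! ### Lyapunov functionals -/

section Lyapunov

variable {𝕜 E : Type*} [RCLike 𝕜] [NormedAddCommGroup E] [InnerProductSpace 𝕜 E]

theorem le_exp_mul_of_hasDerivWithinAt_le {f f' : ℝ → ℝ} {k : ℝ}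
    (hf : ∀ t, 0 ≤ t → HasDerivWithinAt f (f' t) (Set.Ici 0) t)
    (hf' : ∀ t, 0 ≤ t → f' t ≤ k * f t) {t : ℝ} (ht : 0 ≤ t) :
    f t ≤ f 0 * Real.exp (k * t) := by
  have hright : ∀ x ∈ Set.Ico 0 t, HasDerivWithinAt f (f' x) (Set.Ici x) x := fun x hx =>
    (hf x hx.1).mono (Set.Ici_subset_Ici.2 hx.1)
  have hcont : ContinuousOn f (Set.Icc 0 t) := fun x hx =>
    (hf x hx.1).continuousWithinAt.mono Set.Icc_subset_Ici_self
  simpa only [gronwallBound_ε0, sub_zero] using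
    le_gronwallBound_of_liminf_deriv_right_le (ε := 0) hcont
      (fun x hx _ hr => (hright x hx).liminf_right_slope_le hr) le_rfl
      (fun x hx => by simpa only [add_zero] using hf' x hx.1) t ⟨ht, le_rfl⟩

theorem abs_re_inner_apply_le (T : E →L[𝕜] E) (x y : E) :
    |RCLike.re (inner 𝕜 (T x) y)| ≤ ‖T‖ * ‖x‖ * ‖y‖ :=
  calc |RCLike.re (inner 𝕜 (T x) y)| ≤ ‖T x‖ * ‖y‖ :=
        (RCLike.abs_re_le_norm _).trans (norm_inner_le_norm _ _)
    _ ≤ ‖T‖ * ‖x‖ * ‖y‖ := by gcongr; exact T.le_opNorm x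

theorem mul_re_inner_apply_le (T : E →L[𝕜] E) {κ : ℝ} (hκ : 0 < κ) (s : ℝ) (x y : E) :
    s * RCLike.re (inner 𝕜 (T x) y) ≤
      κ / 2 * (s ^ 2 * ‖x‖ ^ 2) + ‖T‖ ^ 2 / (2 * κ) * ‖y‖ ^ 2 :=
  calc s * RCLike.re (inner 𝕜 (T x) y)
      ≤ |s| * |RCLike.re (inner 𝕜 (T x) y)| := (le_abs_self _).trans (abs_mul _ _).le
    _ ≤ |s| * (‖T‖ * ‖x‖ * ‖y‖) := by gcongr; exact abs_re_inner_apply_le T x y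
    _ = κ / 2 * (2 * (|s| * ‖x‖) * (‖T‖ / κ * ‖y‖)) := by field_simp
    _ ≤ κ / 2 * ((|s| * ‖x‖) ^ 2 + (‖T‖ / κ * ‖y‖) ^ 2) := by
        gcongr; exact two_mul_le_add_sq _ _
    _ = κ / 2 * (s ^ 2 * ‖x‖ ^ 2) + ‖T‖ ^ 2 / (2 * κ) * ‖y‖ ^ 2 := by
        rw [mul_pow, sq_abs]; field_simp

variable [NormedSpace ℝ E] [IsScalarTower ℝ 𝕜 E]

theorem hasDerivWithinAt_re_inner_of_isSymmetric {P : E →L[𝕜] E}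
    (hP : (P : E →ₗ[𝕜] E).IsSymmetric) {u : ℝ → E} {u' : E} {s : Set ℝ} {t : ℝ}
    (hu : HasDerivWithinAt u u' s t) :
    HasDerivWithinAt (fun t => RCLike.re (inner 𝕜 (P (u t)) (u t)))
      (2 * RCLike.re (inner 𝕜 (P (u t)) u')) s t := by
  have hPu : HasDerivWithinAt (fun t => P (u t)) (P u') s t :=
    (P.restrictScalars ℝ).hasFDerivAt.comp_hasDerivWithinAt t hu
  refine (RCLike.reCLM.hasFDerivAt.comp_hasDerivWithinAt t (hPu.inner 𝕜 hu)).congr_deriv ?_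
  rw [hP.apply_clm u', RCLike.reCLM_apply, map_add, inner_re_symm (𝕜 := 𝕜) u', ← two_mul]

theorem norm_le_exp_mul_of_lyapunov {P : E →L[𝕜] E} (hP : (P : E →ₗ[𝕜] E).IsSymmetric)
    {m M k : ℝ} (hm : 0 < m) (hM : 0 < M) (hk : 0 ≤ k)
    (hmP : ∀ x, m * ‖x‖ ^ 2 ≤ RCLike.re (inner 𝕜 (P x) x))
    (hPM : ∀ x, RCLike.re (inner 𝕜 (P x) x) ≤ M * ‖x‖ ^ 2)
    {u u' : ℝ → E} (hu : ∀ t, 0 ≤ t → HasDerivWithinAt u (u' t) (Set.Ici 0) t)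
    (hdiss : ∀ t, 0 ≤ t → RCLike.re (inner 𝕜 (P (u t)) (u' t)) ≤ -(k * ‖u t‖ ^ 2))
    {t : ℝ} (ht : 0 ≤ t) :
    ‖u t‖ ≤ √(M / m) * Real.exp (-(k / M * t)) * ‖u 0‖ := by
  have hdecay : ∀ t, 0 ≤ t → 2 * RCLike.re (inner 𝕜 (P (u t)) (u' t)) ≤
      -(2 * (k / M)) * RCLike.re (inner 𝕜 (P (u t)) (u t)) := fun t ht => by
    have hPk : k / M * RCLike.re (inner 𝕜 (P (u t)) (u t)) ≤ k * ‖u t‖ ^ 2 :=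
      calc k / M * RCLike.re (inner 𝕜 (P (u t)) (u t)) ≤ k / M * (M * ‖u t‖ ^ 2) := by
            gcongr; exact hPM (u t)
        _ = k * ‖u t‖ ^ 2 := by field_simp
    linarith [hdiss t ht]
  have henergy := le_exp_mul_of_hasDerivWithinAt_le
    (fun t ht => hasDerivWithinAt_re_inner_of_isSymmetric hP (hu t ht)) hdecay ht
  have hexp : Real.exp (-(2 * (k / M)) * t) = Real.exp (-(k / M * t)) ^ 2 := by
    rw [← Real.exp_nat_mul]; ring_nf
  refine (sq_le_sq₀ (by positivity) (by positivity)).1 ?_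
  calc ‖u t‖ ^ 2 = m * ‖u t‖ ^ 2 / m := by field_simp
    _ ≤ M * ‖u 0‖ ^ 2 * Real.exp (-(2 * (k / M)) * t) / m := by
        refine div_le_div_of_nonneg_right ((hmP (u t)).trans (henergy.trans ?_)) hm.le
        exact mul_le_mul_of_nonneg_right (hPM (u 0)) (Real.exp_pos _).le
    _ = (√(M / m) * Real.exp (-(k / M * t)) * ‖u 0‖) ^ 2 := by
        rw [hexp, mul_pow, mul_pow, Real.sq_sqrt (by positivity)]; ring

end Lyapunov

/-! ### Symmetric hyperbolic systems with non-symmetric relaxation -/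

section Relaxation

variable {V : Type*} [NormedAddCommGroup V] [InnerProductSpace ℂ V]

/-- Decay of the standard type: pointwise in Fourier space at the rate `ξ² / (1 + ξ²)`. -/
def HasStandardDecay (A L : V →L[ℂ] V) : Prop :=
  ∃ C > (0 : ℝ), ∃ c > (0 : ℝ), ∀ ξ : ℝ, ∀ u u' : ℝ → V,
    (∀ t, 0 ≤ t → HasDerivWithinAt u (u' t) (Set.Ici 0) t) →
    (∀ t, 0 ≤ t → u' t + (ξ * Complex.I : ℂ) • A (u t) + L (u t) = 0) →
    ∀ t, 0 ≤ t → ‖u t‖ ≤ C * Real.exp (-(c * (ξ ^ 2 / (1 + ξ ^ 2)) * t)) * ‖u 0‖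

/-- Condition (S) for the system `u_t + A u_x + L u = 0`: the multiplier `S` repairs the lack of
dissipation caused by the skew part of `L`. The requirement that the symmetric part of `L + S L` be
nonnegative with kernel `ker L` is encoded quantitatively, with coercivity constant `β`. -/
structure ConditionS (A L S : V →L[ℂ] V) (β : ℝ) : Prop where
  isSymmetric : (S : V →ₗ[ℂ] V).IsSymmetric
  isSymmetric_comp : ((S.comp A : V →L[ℂ] V) : V →ₗ[ℂ] V).IsSymmetric
  coercive : ∀ x, β * ‖L x‖ ^ 2 ≤ (inner ℂ x (L x + S (L x))).re

/-- Condition (K) for the system `u_t + A u_x + L u = 0`: `K` is a skew-adjoint compensating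
operator. The requirement that the symmetric part of `K A` be positive on `ker L` is encoded
quantitatively, with coercivity constant `κ` up to the error `C * ‖L x‖ ^ 2`. -/
structure ConditionK (A L K : V →L[ℂ] V) (κ C : ℝ) : Prop where
  skew : ∀ x y, inner ℂ (K x) y = -inner ℂ x (K y)
  coercive : ∀ x, κ * ‖x‖ ^ 2 ≤ (inner ℂ x (K (A x))).re + C * ‖L x‖ ^ 2

/-- The operator `1 + ε S - i θ K` whose quadratic form is the Lyapunov functional at a fixed
frequency. -/
def lyapunovOp (S K : V →L[ℂ] V) (ε θ : ℝ) : V →L[ℂ] V :=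
  1 + ((ε : ℂ) • S - (θ * Complex.I : ℂ) • K)

theorem lyapunovOp_apply (S K : V →L[ℂ] V) (ε θ : ℝ) (x : V) :
    lyapunovOp S K ε θ x = x + ((ε : ℂ) • S x - (θ * Complex.I : ℂ) • K x) :=
  rfl

theorem abs_re_inner_lyapunovOp_sub_le {S K : V →L[ℂ] V} {ε θ b : ℝ}
    (hb : |ε| * ‖S‖ + |θ| * ‖K‖ ≤ b) (x : V) :
    |(inner ℂ (lyapunovOp S K ε θ x) x).re - ‖x‖ ^ 2| ≤ b * ‖x‖ ^ 2 := by
  set T : V →L[ℂ] V := (ε : ℂ) • S - (θ * Complex.I : ℂ) • K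
  have hnorm : ‖T‖ ≤ b :=
    calc ‖T‖ ≤ ‖(ε : ℂ) • S‖ + ‖(θ * Complex.I : ℂ) • K‖ := norm_sub_le _ _
      _ = |ε| * ‖S‖ + |θ| * ‖K‖ := by simp [norm_smul]
      _ ≤ b := hb
  have hsplit : inner ℂ (lyapunovOp S K ε θ x) x = inner ℂ x x + inner ℂ (T x) x :=
    inner_add_left x (T x) x
  have hself : (inner ℂ x x).re = ‖x‖ ^ 2 := inner_self_eq_norm_sq (𝕜 := ℂ) x
  rw [hsplit, Complex.add_re, hself, add_sub_cancel_left]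
  calc |(inner ℂ (T x) x).re| ≤ ‖T‖ * ‖x‖ * ‖x‖ := abs_re_inner_apply_le T x x
    _ = ‖T‖ * ‖x‖ ^ 2 := by ring
    _ ≤ b * ‖x‖ ^ 2 := by gcongr

variable {A L S K : V →L[ℂ] V} {β κ C : ℝ}

theorem isSymmetric_lyapunovOp (hS : ConditionS A L S β) (hK : ConditionK A L K κ C) (ε θ : ℝ) :
    (lyapunovOp S K ε θ : V →ₗ[ℂ] V).IsSymmetric := by
  intro x y
  have hSxy : inner ℂ (S x) y = inner ℂ x (S y) := hS.isSymmetric x y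
  simp only [ContinuousLinearMap.coe_coe, lyapunovOp_apply, inner_add_left, inner_add_right,
    inner_sub_left, inner_sub_right, inner_smul_left, inner_smul_right, hSxy, hK.skew x y,
    map_mul, Complex.conj_ofReal, Complex.conj_I]
  ring

theorem re_inner_lyapunovOp_evolution (hA : (A : V →ₗ[ℂ] V).IsSymmetric)
    (hS : ConditionS A L S β) (hK : ConditionK A L K κ C) (ε θ ξ : ℝ) (x : V) :
    (inner ℂ (lyapunovOp S K ε θ x) (-((ξ * Complex.I : ℂ) • A x) - L x)).re =
      -(inner ℂ x (L x)).re - ε * (inner ℂ x (S (L x))).re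
        - θ * ξ * (inner ℂ x (K (A x))).re + θ * (inner ℂ (Complex.I • K x) (L x)).re := by
  have hAx : (inner ℂ x (A x)).im = 0 := hA.im_inner_self_apply x
  have hSAx : (inner ℂ x (S (A x))).im = 0 := hS.isSymmetric_comp.im_inner_self_apply x
  have hSx : ∀ y, inner ℂ (S x) y = inner ℂ x (S y) := hS.isSymmetric x
  simp only [lyapunovOp_apply, inner_add_left, inner_sub_left, inner_sub_right, inner_neg_right,
    inner_smul_left, inner_smul_right, hSx, hK.skew x, map_mul, Complex.conj_ofReal,
    Complex.conj_I, Complex.add_re, Complex.sub_re, Complex.neg_re, Complex.mul_re,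
    Complex.add_im, Complex.sub_im, Complex.neg_im, Complex.mul_im, Complex.ofReal_re,
    Complex.ofReal_im, Complex.I_re, Complex.I_im]
  linear_combination ξ * hAx + ε * ξ * hSAx

theorem sq_div_one_add_sq_le (ξ : ℝ) : (ξ / (1 + ξ ^ 2)) ^ 2 ≤ ξ ^ 2 / (1 + ξ ^ 2) := by
  rw [div_pow]
  gcongr
  exact le_self_pow₀ (by linarith [sq_nonneg ξ]) two_ne_zero

theorem sq_div_one_add_sq_le_one (ξ : ℝ) : ξ ^ 2 / (1 + ξ ^ 2) ≤ 1 :=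
  div_le_one_of_le₀ (by linarith) (by positivity)

theorem re_inner_lyapunovOp_evolution_le (hA : (A : V →ₗ[ℂ] V).IsSymmetric)
    (hL : ∀ x, 0 ≤ (inner ℂ x (L x)).re) (hS : ConditionS A L S β) (hK : ConditionK A L K κ C)
    (hκ : 0 < κ) (hC : 0 ≤ C) {ε δ : ℝ} (hε : 0 ≤ ε) (hε1 : ε ≤ 1) (hδ : 0 ≤ δ)
    (hδε : (C + ‖K‖ ^ 2 / (2 * κ)) * δ ≤ ε * β) (ξ : ℝ) (x : V) :
    (inner ℂ (lyapunovOp S K ε (δ * (ξ / (1 + ξ ^ 2))) x)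
      (-((ξ * Complex.I : ℂ) • A x) - L x)).re ≤
      -(δ * κ / 2 * (ξ ^ 2 / (1 + ξ ^ 2)) * ‖x‖ ^ 2) := by
  rw [re_inner_lyapunovOp_evolution hA hS hK]
  set s := ξ / (1 + ξ ^ 2) with hs
  set ρ := ξ ^ 2 / (1 + ξ ^ 2) with hρ
  have hρ1 : ρ ≤ 1 := sq_div_one_add_sq_le_one ξ
  have hsξ : s * ξ = ρ := by rw [hs, hρ]; ring
  have hrelax : ε * (β * ‖L x‖ ^ 2) ≤ (inner ℂ x (L x)).re + ε * (inner ℂ x (S (L x))).re := by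
    have hSx := hS.coercive x
    rw [inner_add_right, Complex.add_re] at hSx
    linarith [mul_le_mul_of_nonneg_left hSx hε, mul_nonneg (sub_nonneg.2 hε1) (hL x)]
  have hcomp : ρ * (κ * ‖x‖ ^ 2) ≤ ρ * (inner ℂ x (K (A x))).re + C * ‖L x‖ ^ 2 :=
    calc ρ * (κ * ‖x‖ ^ 2) ≤ ρ * ((inner ℂ x (K (A x))).re + C * ‖L x‖ ^ 2) := by
          gcongr; exact hK.coercive x
      _ = ρ * (inner ℂ x (K (A x))).re + ρ * (C * ‖L x‖ ^ 2) := mul_add _ _ _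
      _ ≤ ρ * (inner ℂ x (K (A x))).re + C * ‖L x‖ ^ 2 := by
          exact add_le_add le_rfl (mul_le_of_le_one_left (by positivity) hρ1)
  have hcross : s * (inner ℂ (Complex.I • K x) (L x)).re ≤
      κ / 2 * (ρ * ‖x‖ ^ 2) + ‖K‖ ^ 2 / (2 * κ) * ‖L x‖ ^ 2 :=
    calc s * (inner ℂ (Complex.I • K x) (L x)).re
        ≤ κ / 2 * (s ^ 2 * ‖x‖ ^ 2) + ‖Complex.I • K‖ ^ 2 / (2 * κ) * ‖L x‖ ^ 2 :=
          mul_re_inner_apply_le (Complex.I • K) hκ s x (L x)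
      _ ≤ κ / 2 * (ρ * ‖x‖ ^ 2) + ‖K‖ ^ 2 / (2 * κ) * ‖L x‖ ^ 2 := by
          rw [norm_smul, Complex.norm_I, one_mul]
          gcongr
          exact sq_div_one_add_sq_le ξ
  have habsorb := mul_le_mul_of_nonneg_right hδε (sq_nonneg ‖L x‖)
  rw [mul_assoc δ, hsξ]
  linarith [mul_le_mul_of_nonneg_left hcomp hδ, mul_le_mul_of_nonneg_left hcross hδ]

theorem exists_lyapunov_weights (S K : V →L[ℂ] V) (hβ : 0 < β) (B : ℝ) :
    ∃ ε δ : ℝ, 0 < ε ∧ ε ≤ 1 ∧ 0 < δ ∧ B * δ ≤ ε * β ∧ ε * ‖S‖ + δ * ‖K‖ ≤ 1 / 2 := by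
  obtain ⟨ε, hε, hεS⟩ := exists_pos_mul_lt (show (0 : ℝ) < 1 / 4 by norm_num) (max ‖S‖ 1)
  obtain ⟨δ, hδ, hδK⟩ := exists_pos_mul_lt (show 0 < min (ε * β) (1 / 4) by positivity)
    (max ‖K‖ B)
  have hS : ‖S‖ * ε ≤ max ‖S‖ 1 * ε := by gcongr; exact le_max_left _ _
  have h1 : 1 * ε ≤ max ‖S‖ 1 * ε := by gcongr; exact le_max_right _ _
  have hK : ‖K‖ * δ ≤ max ‖K‖ B * δ := by gcongr; exact le_max_left _ _
  have hB : B * δ ≤ max ‖K‖ B * δ := by gcongr; exact le_max_right _ _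
  obtain ⟨hδβ, hδ4⟩ := lt_min_iff.1 hδK
  exact ⟨ε, δ, hε, by linarith, hδ, by linarith, by linarith⟩

theorem hasStandardDecay_of_conditionS_of_conditionK
    (hA : (A : V →ₗ[ℂ] V).IsSymmetric) (hL : ∀ x, 0 ≤ (inner ℂ x (L x)).re)
    (hS : ConditionS A L S β) (hβ : 0 < β) (hK : ConditionK A L K κ C) (hκ : 0 < κ)
    (hC : 0 ≤ C) : HasStandardDecay A L := by
  obtain ⟨ε, δ, hε, hε1, hδ, hδε, hnear⟩ :=
    exists_lyapunov_weights S K hβ (C + ‖K‖ ^ 2 / (2 * κ))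
  refine ⟨√(3 / 2 / (1 / 2)), by positivity, δ * κ / 2 / (3 / 2), by positivity,
    fun ξ u u' hu hode t ht => ?_⟩
  have hs : |ξ / (1 + ξ ^ 2)| ≤ 1 :=
    (sq_le_one_iff_abs_le_one _).1 ((sq_div_one_add_sq_le ξ).trans (sq_div_one_add_sq_le_one ξ))
  have hweight : |ε| * ‖S‖ + |δ * (ξ / (1 + ξ ^ 2))| * ‖K‖ ≤ 1 / 2 := by
    rw [abs_of_pos hε, abs_mul, abs_of_pos hδ]
    exact le_trans (by gcongr; exact mul_le_of_le_one_right hδ.le hs) hnear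
  have hequiv : ∀ x,
      1 / 2 * ‖x‖ ^ 2 ≤ (inner ℂ (lyapunovOp S K ε (δ * (ξ / (1 + ξ ^ 2))) x) x).re ∧
      (inner ℂ (lyapunovOp S K ε (δ * (ξ / (1 + ξ ^ 2))) x) x).re ≤ 3 / 2 * ‖x‖ ^ 2 := fun x => by
    have hx := abs_le.1 (abs_re_inner_lyapunovOp_sub_le hweight x)
    constructor <;> linarith [hx.1, hx.2]
  have hdiss := re_inner_lyapunovOp_evolution_le hA hL hS hK hκ hC hε.le hε1 hδ.le hδε ξ
  have hu' : ∀ t, 0 ≤ t → u' t = -((ξ * Complex.I : ℂ) • A (u t)) - L (u t) := fun t ht => by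
    rw [← sub_eq_zero, ← hode t ht]
    abel
  rw [div_mul_eq_mul_div]
  exact norm_le_exp_mul_of_lyapunov
    (isSymmetric_lyapunovOp hS hK ε (δ * (ξ / (1 + ξ ^ 2)))) (by norm_num) (by norm_num)
    (by positivity) (fun x => (hequiv x).1) (fun x => (hequiv x).2) hu
    (fun t ht => by rw [hu' t ht]; exact hdiss (u t)) ht

end Relaxation

/-! ### The Timoshenko system -/

section Timoshenko

/-- The operator on the Euclidean space `ℂᵐ` given by a real matrix. -/
def matrixOp {m : ℕ} (X : Matrix (Fin m) (Fin m) ℝ) :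
    EuclideanSpace ℂ (Fin m) →L[ℂ] EuclideanSpace ℂ (Fin m) :=
  toEuclideanCLM (𝕜 := ℂ) (cmap X)

/-- The symmetric multiplier of condition (S) for the Timoshenko system. -/
def TimS (σ : ℝ) : Matrix (Fin 4) (Fin 4) ℝ :=
  -(!![0, 0, 0, σ; 0, 0, σ, 0; 0, σ, 0, 0; σ, 0, 0, 0])

/-- The compensating matrix of condition (K) for the Timoshenko system with `a = 1`. -/
def TimK : Matrix (Fin 4) (Fin 4) ℝ :=
  !![0, 1, 0, 0; -1, 0, 0, 0; 0, 0, 0, -1; 0, 0, 1, 0]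

theorem cnrm_eq_norm_toLp {m : ℕ} (z : Fin m → ℂ) : cnrm z = ‖WithLp.toLp 2 z‖ := by
  simp only [cnrm, EuclideanSpace.norm_eq, Complex.normSq_eq_norm_sq]

theorem matrixOp_apply_apply {m : ℕ} (X : Matrix (Fin m) (Fin m) ℝ)
    (x : EuclideanSpace ℂ (Fin m)) (i : Fin m) : matrixOp X x i = ∑ j, (X i j : ℂ) * x j :=
  rfl

theorem matrixOp_mul {m : ℕ} (X Y : Matrix (Fin m) (Fin m) ℝ) :
    matrixOp (X * Y) = (matrixOp X).comp (matrixOp Y) := by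
  have hXY : cmap (X * Y) = cmap X * cmap Y := Matrix.map_mul (f := Complex.ofRealHom)
  rw [matrixOp, hXY, map_mul]
  rfl

theorem matrixOp_neg {m : ℕ} (X : Matrix (Fin m) (Fin m) ℝ) : matrixOp (-X) = -matrixOp X := by
  ext x i
  simp [matrixOp_apply_apply]

theorem inner_matrixOp_left {m : ℕ} (X : Matrix (Fin m) (Fin m) ℝ)
    (x y : EuclideanSpace ℂ (Fin m)) :
    inner ℂ (matrixOp X x) y = inner ℂ x (matrixOp Xᵀ y) := by
  have hstar : cmap Xᵀ = star (cmap X) := by ext i j; simp [cmap]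
  rw [matrixOp, matrixOp, hstar, map_star, ContinuousLinearMap.star_eq_adjoint,
    ContinuousLinearMap.adjoint_inner_right]

theorem isSymmetric_matrixOp {m : ℕ} {X : Matrix (Fin m) (Fin m) ℝ} (hX : X.IsSymm) :
    (matrixOp X : EuclideanSpace ℂ (Fin m) →ₗ[ℂ] EuclideanSpace ℂ (Fin m)).IsSymmetric :=
  fun x y => (inner_matrixOp_left X x y).trans (by rw [hX.eq]; rfl)

theorem matrixOp_TimA_one (x : EuclideanSpace ℂ (Fin 4)) :
    matrixOp (TimA 1) x = !₂[-x 1, -x 0, -x 3, -x 2] := by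
  ext i
  fin_cases i <;> simp [matrixOp_apply_apply, TimA, Fin.sum_univ_four]

theorem matrixOp_TimL (γ : ℝ) (x : EuclideanSpace ℂ (Fin 4)) :
    matrixOp (TimL γ) x = !₂[x 3, 0, 0, γ * x 3 - x 0] := by
  ext i
  fin_cases i <;> simp [matrixOp_apply_apply, TimL, Fin.sum_univ_four, neg_add_eq_sub]

theorem matrixOp_TimS (σ : ℝ) (x : EuclideanSpace ℂ (Fin 4)) :
    matrixOp (TimS σ) x = !₂[-σ * x 3, -σ * x 2, -σ * x 1, -σ * x 0] := by
  ext i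
  fin_cases i <;> simp [matrixOp_apply_apply, TimS, Fin.sum_univ_four]

theorem matrixOp_TimK (x : EuclideanSpace ℂ (Fin 4)) :
    matrixOp TimK x = !₂[x 1, -x 0, -x 3, x 2] := by
  ext i
  fin_cases i <;> simp [matrixOp_apply_apply, TimK, Fin.sum_univ_four]

theorem isSymm_TimA (a : ℝ) : (TimA a).IsSymm := by
  ext i j
  fin_cases i <;> fin_cases j <;> simp [TimA]

theorem isSymm_TimS (σ : ℝ) : (TimS σ).IsSymm := by
  ext i j
  fin_cases i <;> fin_cases j <;> simp [TimS]

theorem isSymm_TimS_mul_TimA_one (σ : ℝ) : (TimS σ * TimA 1).IsSymm := by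
  ext i j
  fin_cases i <;> fin_cases j <;> simp [TimS, TimA]

theorem transpose_TimK : TimKᵀ = -TimK := by
  ext i j
  fin_cases i <;> fin_cases j <;> simp [TimK]

theorem re_inner_vec_four (x : EuclideanSpace ℂ (Fin 4)) (a b c d : ℂ) :
    (inner ℂ x !₂[a, b, c, d]).re = (inner ℂ (x 0) a).re + (inner ℂ (x 1) b).re +
      (inner ℂ (x 2) c).re + (inner ℂ (x 3) d).re := by
  rw [PiLp.inner_apply, Fin.sum_univ_four, Complex.add_re, Complex.add_re, Complex.add_re]
  rfl

theorem re_inner_eq_re_mul_re_add_im_mul_im (z w : ℂ) :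
    (inner ℂ z w).re = z.re * w.re + z.im * w.im := by
  simp [mul_comm]

theorem re_inner_matrixOp_TimL (γ : ℝ) (x : EuclideanSpace ℂ (Fin 4)) :
    (inner ℂ x (matrixOp (TimL γ) x)).re = γ * ‖x 3‖ ^ 2 := by
  rw [matrixOp_TimL, re_inner_vec_four]
  simp only [re_inner_eq_re_mul_re_add_im_mul_im, Complex.sq_norm, Complex.normSq_apply,
    Complex.sub_re, Complex.sub_im, Complex.re_ofReal_mul, Complex.im_ofReal_mul,
    Complex.zero_re, Complex.zero_im]
  ring

theorem norm_sq_matrixOp_TimL (γ : ℝ) (x : EuclideanSpace ℂ (Fin 4)) :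
    ‖matrixOp (TimL γ) x‖ ^ 2 = ‖x 3‖ ^ 2 + ‖γ * x 3 - x 0‖ ^ 2 := by
  simp [matrixOp_TimL, EuclideanSpace.norm_sq_eq, Fin.sum_univ_four]

theorem norm_ofReal_mul_sub_sq (r : ℝ) (z w : ℂ) :
    ‖r * z - w‖ ^ 2 = r ^ 2 * ‖z‖ ^ 2 - 2 * r * (inner ℂ w z).re + ‖w‖ ^ 2 := by
  simp only [Complex.sq_norm, Complex.normSq_apply, Complex.sub_re, Complex.sub_im,
    RCLike.inner_apply, Complex.mul_re, Complex.mul_im,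
    Complex.ofReal_re, Complex.ofReal_im, Complex.conj_re, Complex.conj_im]
  ring

theorem norm_sq_le_of_norm_ofReal_mul_sub (r : ℝ) (z w : ℂ) :
    ‖w‖ ^ 2 ≤ 2 * (r ^ 2 * ‖z‖ ^ 2 + ‖r * z - w‖ ^ 2) :=
  calc ‖w‖ ^ 2 = ‖r * z - (r * z - w)‖ ^ 2 := by rw [sub_sub_cancel]
    _ ≤ (‖r * z‖ + ‖r * z - w‖) ^ 2 := by gcongr; exact norm_sub_le _ _
    _ ≤ 2 * (‖r * z‖ ^ 2 + ‖r * z - w‖ ^ 2) := add_sq_le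
    _ = 2 * (r ^ 2 * ‖z‖ ^ 2 + ‖r * z - w‖ ^ 2) := by
        rw [norm_mul, mul_pow, Complex.norm_real, Real.norm_eq_abs, sq_abs]

theorem re_inner_matrixOp_TimS_TimL (σ γ : ℝ) (x : EuclideanSpace ℂ (Fin 4)) :
    (inner ℂ x (matrixOp (TimS σ) (matrixOp (TimL γ) x))).re =
      σ * (‖x 0‖ ^ 2 - γ * (inner ℂ (x 0) (x 3)).re - ‖x 3‖ ^ 2) := by
  rw [matrixOp_TimS, matrixOp_TimL, re_inner_vec_four]
  simp only [Matrix.cons_val, ← Complex.ofReal_neg,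
    re_inner_eq_re_mul_re_add_im_mul_im, Complex.sq_norm, Complex.normSq_apply,
    Complex.sub_re, Complex.sub_im, Complex.re_ofReal_mul, Complex.im_ofReal_mul,
    Complex.zero_re, Complex.zero_im]
  ring

theorem re_inner_matrixOp_TimK_TimA_one (x : EuclideanSpace ℂ (Fin 4)) :
    (inner ℂ x (matrixOp TimK (matrixOp (TimA 1) x))).re =
      ‖x‖ ^ 2 - 2 * (‖x 0‖ ^ 2 + ‖x 3‖ ^ 2) := by
  rw [matrixOp_TimK, matrixOp_TimA_one, re_inner_vec_four, EuclideanSpace.norm_sq_eq,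
    Fin.sum_univ_four]
  simp only [Matrix.cons_val, re_inner_eq_re_mul_re_add_im_mul_im,
    Complex.sq_norm, Complex.normSq_apply, Complex.neg_re, Complex.neg_im]
  ring

theorem conditionS_timoshenko {γ σ : ℝ} (hσ : 0 ≤ σ) (hσγ : σ * (2 + γ ^ 2) = γ) :
    ConditionS (matrixOp (TimA 1)) (matrixOp (TimL γ)) (matrixOp (TimS σ)) (σ / 2) where
  isSymmetric := isSymmetric_matrixOp (isSymm_TimS σ)
  isSymmetric_comp := by
    rw [← matrixOp_mul]
    exact isSymmetric_matrixOp (isSymm_TimS_mul_TimA_one σ)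
  coercive x := by
    have hsum : (inner ℂ x (matrixOp (TimL γ) x + matrixOp (TimS σ) (matrixOp (TimL γ) x))).re =
        σ / 2 * ‖matrixOp (TimL γ) x‖ ^ 2
          + σ / 2 * (‖x 0‖ ^ 2 + (1 + γ ^ 2) * ‖x 3‖ ^ 2) := by
      rw [inner_add_right, Complex.add_re, re_inner_matrixOp_TimL, re_inner_matrixOp_TimS_TimL,
        norm_sq_matrixOp_TimL, norm_ofReal_mul_sub_sq]
      linear_combination -‖x 3‖ ^ 2 * hσγ
    rw [hsum]
    exact le_add_of_nonneg_right (by positivity)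

theorem conditionK_timoshenko (γ : ℝ) :
    ConditionK (matrixOp (TimA 1)) (matrixOp (TimL γ)) (matrixOp TimK) 1 (4 * (1 + γ ^ 2)) where
  skew x y := by
    rw [inner_matrixOp_left, transpose_TimK, matrixOp_neg, _root_.neg_apply, inner_neg_right]
  coercive x := by
    have h0 := norm_sq_le_of_norm_ofReal_mul_sub γ (x 3) (x 0)
    have hγ : 0 ≤ γ ^ 2 * ‖γ * x 3 - x 0‖ ^ 2 := by positivity
    rw [re_inner_matrixOp_TimK_TimA_one, norm_sq_matrixOp_TimL]
    linarith [sq_nonneg ‖x 3‖]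

theorem hasStandardDecay_timoshenko {γ : ℝ} (hγ : 0 < γ) :
    HasStandardDecay (matrixOp (TimA 1)) (matrixOp (TimL γ)) := by
  have hσ : 0 < γ / (2 + γ ^ 2) := by positivity
  refine hasStandardDecay_of_conditionS_of_conditionK (isSymmetric_matrixOp (isSymm_TimA 1))
    (fun x => ?_) (conditionS_timoshenko hσ.le (div_mul_cancel₀ γ (by positivity))) (half_pos hσ)
    (conditionK_timoshenko γ) one_pos (by positivity)
  rw [re_inner_matrixOp_TimL]
  positivity

end Timoshenko

/-- **Theorem 6.1 (decay of the standard type for the Timoshenko system, `a = 1`).**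
Solutions of `û′ + iξA û + L û = 0` satisfy `|û(t)| ≤ C e^{−c ρ(ξ) t}|û(0)|`
with `ρ(ξ) = ξ²/(1+ξ²)`. -/
theorem timoshenko_pointwise_decay_standard
    (a γ : ℝ) (ha : a = 1) (hγ : 0 < γ) :
    ∃ C > (0:ℝ), ∃ c > (0:ℝ), ∀ ξ : ℝ,
      ∀ u u' : ℝ → (Fin 4 → ℂ),
      (∀ t : ℝ, 0 ≤ t → HasDerivWithinAt u (u' t) (Set.Ici 0) t) →
      (∀ t : ℝ, 0 ≤ t →
        u' t + ((ξ : ℂ) * Complex.I) • (cmap (TimA a)).mulVec (u t)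
          + (cmap (TimL γ)).mulVec (u t) = 0) →
      ∀ t : ℝ, 0 ≤ t →
        cnrm (u t) ≤ C * Real.exp (-(c * (ξ ^ 2 / (1 + ξ ^ 2)) * t)) * cnrm (u 0) := by
  subst ha
  obtain ⟨C, hC, c, hc, hdecay⟩ := hasStandardDecay_timoshenko hγ
  refine ⟨C, hC, c, hc, fun ξ u u' hu hode t ht => ?_⟩
  rw [cnrm_eq_norm_toLp, cnrm_eq_norm_toLp]
  exact hdecay ξ (fun t => WithLp.toLp 2 (u t)) (fun t => WithLp.toLp 2 (u' t))
    (fun t ht => (PiLp.hasFDerivAt_toLp 2 (u t)).comp_hasDerivWithinAt t (hu t ht))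
    (fun t ht => congrArg (WithLp.toLp 2) (hode t ht)) t ht
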